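/- arXiv:2601.08969 — 3 statements merged into one kernel-verified Lean document; each statement's English description precedes it below -/
import Mathlib

section
/- For every positive integer d, ∫_{U(d)} (C ⊗ C)† · Π^eq · (C ⊗ C) dμ_d(C) = (2/(d+1)) · Π^sym. -/
open Matrix MeasureTheory
open scoped Kronecker

noncomputable instance {m n : Type*} [Fintype m] [Fintype n] :
    MeasurableSpace (Matrix m n ℂ) := borel _
instance {m n : Type*} [Fintype m] [Fintype n] : BorelSpace (Matrix m n ℂ) := ⟨rfl⟩

/-- `Π^eq = Σ_x |x,x⟩⟨x,x|`. -/
noncomputable def PiEq (d : ℕ) : Matrix (Fin d × Fin d) (Fin d × Fin d) ℂ :=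
  Matrix.of fun p q => if p.1 = p.2 ∧ q.1 = q.2 ∧ p.1 = q.1 then 1 else 0

/-- The swap operator `F|x,y⟩ = |y,x⟩`. -/
noncomputable def SwapF (d : ℕ) : Matrix (Fin d × Fin d) (Fin d × Fin d) ℂ :=
  Matrix.of fun p q => if p.1 = q.2 ∧ p.2 = q.1 then 1 else 0

/-- `Π^sym = (1/2)(I + F)`, the projection onto the symmetric subspace. -/
noncomputable def PiSym (d : ℕ) : Matrix (Fin d × Fin d) (Fin d × Fin d) ℂ :=
  ((1 : ℂ) / 2) • ((1 : Matrix (Fin d × Fin d) (Fin d × Fin d) ℂ) + SwapF d)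

/-!
Right invariance of the Haar measure makes `T = ∫ (C ⊗ C)† A (C ⊗ C) dμ(C)` commute with `V ⊗ V` for
every unitary `V`. Any such `T` is a combination of `I` and `F`: commuting with diagonal unitaries
kills the entry at `|a,b⟩⟨c,e|` unless `{a,b} = {c,e}` as multisets, commuting with permutations
leaves a combination of `I`, `F` and `Π^eq`, and a unitary with two nonzero entries in one row rules
out `Π^eq`. If moreover `A F = A`, as for `A = Π^eq`, then `T F = T`, so `T` is a multiple of
`I + F`. The multiple is found by taking traces: `T` has the trace of `A`, and `I + F` has trace
`d (d + 1)`.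
-/

theorem isMulRightInvariant_of_isHaarMeasure_of_isProbabilityMeasure {G : Type*} [Group G]
    [TopologicalSpace G] [IsTopologicalGroup G] [LocallyCompactSpace G] [MeasurableSpace G]
    [BorelSpace G] (μ : Measure G) [μ.IsHaarMeasure] [IsProbabilityMeasure μ] :
    μ.IsMulRightInvariant where
  map_mul_right_eq_self g := by
    have : IsProbabilityMeasure (μ.map (· * g)) :=
      Measure.isProbabilityMeasure_map (continuous_mul_const g).measurable.aemeasurable
    exact Measure.isHaarMeasure_eq_of_isProbabilityMeasure _ _

section UnitaryMatrices

theorem compactSpace_unitary {E : Type*} [NormedRing E] [StarRing E] [CStarRing E] [ProperSpace E] :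
    CompactSpace (unitary E) := by
  refine isCompact_iff_compactSpace.mp <|
    (isCompact_closedBall (0 : E) ‖(1 : E)‖).of_isClosed_subset isClosed_unitary fun U hU => ?_
  simpa using (CStarRing.norm_mem_unitary_mul 1 hU).le

open scoped Matrix.Norms.L2Operator in
instance compactSpace_unitaryGroup {𝕜 n : Type*} [RCLike 𝕜] [Fintype n] [DecidableEq n] :
    CompactSpace (unitaryGroup n 𝕜) :=
  have : ProperSpace (Matrix n n 𝕜) := FiniteDimensional.proper_rclike 𝕜 _
  compactSpace_unitary

variable {n R : Type*} [Fintype n] [DecidableEq n] [CommRing R] [StarRing R]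

theorem diagonal_mem_unitaryGroup {z : n → R} (hz : ∀ i, z i * star (z i) = 1) :
    diagonal z ∈ unitaryGroup n R := by
  rw [mem_unitaryGroup_iff, star_eq_conjTranspose, diagonal_conjTranspose,
    diagonal_mul_diagonal, ← diagonal_one]
  exact congrArg diagonal (funext hz)

theorem permMatrix_mem_unitaryGroup (σ : Equiv.Perm n) : σ.permMatrix R ∈ unitaryGroup n R := by
  rw [mem_unitaryGroup_iff, star_eq_conjTranspose, conjTranspose_permMatrix, ← permMatrix_mul,
    inv_mul_cancel, permMatrix_one]

theorem one_sub_two_smul_vecMulVec_mem_unitaryGroup {v : n → R} (hv : star v ⬝ᵥ v = 1) :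
    1 - (2 : R) • vecMulVec v (star v) ∈ unitaryGroup n R := by
  have hP : vecMulVec v (star v) * vecMulVec v (star v) = vecMulVec v (star v) := by
    rw [vecMulVec_mul_vecMulVec, hv, one_smul]
  rw [mem_unitaryGroup_iff, star_eq_conjTranspose, conjTranspose_sub, conjTranspose_smul,
    conjTranspose_vecMulVec, star_star, conjTranspose_one, star_ofNat]
  simp only [sub_mul, mul_sub, one_mul, mul_one, smul_mul_smul_comm, hP]
  module

theorem exists_mem_unitaryGroup_apply_ne_zero {a b : n} (hab : a ≠ b) :
    ∃ V ∈ unitaryGroup n ℂ, V a a ≠ 0 ∧ V a b ≠ 0 := by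
  let v : n → ℂ := Pi.single a (3 / 5) + Pi.single b (4 / 5)
  have hva : v a = 3 / 5 := by simp [v, hab]
  have hvb : v b = 4 / 5 := by simp [v, hab.symm]
  have hstar : star v = v := by simp [v, Pi.star_single]
  have hv : star v ⬝ᵥ v = 1 := by
    rw [hstar]
    calc v ⬝ᵥ v
      _ = 3 / 5 * v a + 4 / 5 * v b := by simp only [v, add_dotProduct, single_dotProduct]
      _ = 1 := by norm_num [hva, hvb]
  refine ⟨_, one_sub_two_smul_vecMulVec_mem_unitaryGroup hv, ?_, ?_⟩
  · norm_num [hstar, vecMulVec_apply, hva]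
  · norm_num [hstar, vecMulVec_apply, hva, hvb, hab]

end UnitaryMatrices

section SwapMatrix

variable (n R : Type*) [DecidableEq n] [CommSemiring R]

/-- The operator on `R^n ⊗ R^n` exchanging the two tensor factors. -/
def swapMatrix : Matrix (n × n) (n × n) R :=
  Equiv.Perm.permMatrix R (Equiv.prodComm n n)

variable {n R}

theorem swapMatrix_apply (p q : n × n) : swapMatrix n R p q = if p.swap = q then 1 else 0 := by
  simp [swapMatrix, Equiv.toPEquiv_apply, PEquiv.toMatrix_apply, eq_comm]

variable [Fintype n]

theorem mul_swapMatrix (A : Matrix (n × n) (n × n) R) :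
    A * swapMatrix n R = A.submatrix id Prod.swap :=
  PEquiv.mul_toMatrix_toPEquiv _ _

theorem swapMatrix_mul (A : Matrix (n × n) (n × n) R) :
    swapMatrix n R * A = A.submatrix Prod.swap id :=
  PEquiv.toMatrix_toPEquiv_mul _ _

theorem swapMatrix_mul_self : swapMatrix n R * swapMatrix n R = 1 := by
  rw [mul_swapMatrix]
  ext p q
  simp [swapMatrix_apply, one_apply]

theorem commute_swapMatrix_kronecker_self (V : Matrix n n R) :
    Commute (swapMatrix n R) (V ⊗ₖ V) := by
  rw [Commute, SemiconjBy, swapMatrix_mul, mul_swapMatrix]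
  ext p q
  exact mul_comm _ _

theorem trace_swapMatrix : (swapMatrix n R).trace = Fintype.card n := by
  simp only [trace, diag_apply, swapMatrix_apply, Fintype.sum_prod_type, Prod.swap_prod_mk,
    Prod.mk.injEq, ite_and]
  simp

end SwapMatrix

section Commutant

variable (n : Type*) [DecidableEq n]

/-- The projection `Π^eq` of `ℂ^n ⊗ ℂ^n` onto the span of the vectors `|x,x⟩`. -/
def coincidenceProj : Matrix (n × n) (n × n) ℂ :=
  diagonal fun p => if p.1 = p.2 then 1 else 0

variable {n} [Fintype n] {M : Matrix (n × n) (n × n) ℂ}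

theorem apply_eq_zero_of_commute_kronecker_diagonal
    (hM : ∀ z : n → ℂ, (∀ i, z i * star (z i) = 1) → Commute M (diagonal z ⊗ₖ diagonal z))
    {a b c e : n} (h : ¬(a = c ∧ b = e ∨ a = e ∧ b = c)) : M (a, b) (c, e) = 0 := by
  by_contra h0
  have hphase (j : n) : (if c = j then Complex.I else 1) * (if e = j then Complex.I else 1) =
      (if a = j then Complex.I else 1) * (if b = j then Complex.I else 1) := by
    have hcomm := hM (fun i => if i = j then Complex.I else 1) fun i => by split_ifs <;> simp
    rw [diagonal_kronecker_diagonal] at hcomm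
    have hentry := congrFun₂ hcomm.eq (a, b) (c, e)
    rw [mul_diagonal, diagonal_mul, mul_comm] at hentry
    exact mul_right_cancel₀ h0 hentry
  -- As `1`, `i` and `-1` are distinct, `hphase j` says that `j` occurs as often in `(c, e)` as in
  -- `(a, b)`.
  have hphases := And.intro (hphase a) (hphase b)
  split_ifs at hphases <;> first | grind | norm_num [Complex.ext_iff] at hphases

theorem apply_perm_of_commute_kronecker_permMatrix {R : Type*} [CommSemiring R]
    {M : Matrix (n × n) (n × n) R} {σ : Equiv.Perm n}
    (hM : Commute M (σ.permMatrix R ⊗ₖ σ.permMatrix R)) (a b c e : n) :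
    M (σ a, σ b) (σ c, σ e) = M (a, b) (c, e) := by
  have h := congrFun₂ hM.eq (a, b) (σ c, σ e)
  simpa [mul_apply, Fintype.sum_prod_type] using h.symm

theorem not_commute_coincidenceProj_kronecker_self {a b : n} (hab : a ≠ b) {V : Matrix n n ℂ}
    (ha : V a a ≠ 0) (hb : V a b ≠ 0) : ¬Commute (coincidenceProj n) (V ⊗ₖ V) := fun hcomm => by
  have h := congrFun₂ hcomm.eq (a, a) (a, b)
  simp [coincidenceProj, hab, ha, hb] at h

theorem exists_eq_one_add_swapMatrix_add_coincidenceProj {a b : n} (hab : a ≠ b)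
    (hM : ∀ V ∈ unitaryGroup n ℂ, Commute M (V ⊗ₖ V)) :
    ∃ α β δ : ℂ, M = α • 1 + β • swapMatrix n ℂ + δ • coincidenceProj n := by
  have hperm (σ : Equiv.Perm n) (i j k l : n) : M (σ i, σ j) (σ k, σ l) = M (i, j) (k, l) :=
    apply_perm_of_commute_kronecker_permMatrix (hM _ (permMatrix_mem_unitaryGroup σ)) i j k l
  have htrans {i j : n} (hij : i ≠ j) : ∃ σ : Equiv.Perm n, σ a = i ∧ σ b = j :=
    MulAction.is_two_pretransitive_iff.mp (Equiv.Perm.isMultiplyPretransitive n 2) hab hij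
  refine ⟨M (a, b) (a, b), M (a, b) (b, a),
    M (a, a) (a, a) - M (a, b) (a, b) - M (a, b) (b, a), ?_⟩
  ext ⟨i, j⟩ ⟨k, l⟩
  simp only [Matrix.add_apply, Matrix.smul_apply, smul_eq_mul, one_apply, swapMatrix_apply,
    coincidenceProj, diagonal_apply, Prod.swap_prod_mk, Prod.mk.injEq]
  by_cases h : i = k ∧ j = l ∨ i = l ∧ j = k
  · rcases eq_or_ne i j with rfl | hij
    · obtain ⟨rfl, rfl⟩ : i = k ∧ i = l := by tauto
      have hdiag : M (i, i) (i, i) = M (a, a) (a, a) := by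
        simpa using hperm (Equiv.swap a i) a a a a
      simp [hdiag]
    · obtain ⟨σ, rfl, rfl⟩ := htrans hij
      rcases h with ⟨rfl, rfl⟩ | ⟨rfl, rfl⟩ <;> simp [hperm, hij, hij.symm]
  · rw [apply_eq_zero_of_commute_kronecker_diagonal
      (fun z hz => hM _ (diagonal_mem_unitaryGroup hz)) h]
    grind

theorem exists_eq_one_add_swapMatrix_of_commute_kronecker_self
    (hM : ∀ V ∈ unitaryGroup n ℂ, Commute M (V ⊗ₖ V)) :
    ∃ α β : ℂ, M = α • 1 + β • swapMatrix n ℂ := by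
  rcases subsingleton_or_nontrivial n with _ | _
  · refine ⟨M.trace, 0, ?_⟩
    ext i j
    obtain rfl := Subsingleton.elim i j
    simp [trace, Fintype.sum_subsingleton _ i]
  · obtain ⟨a, b, hab⟩ := exists_pair_ne n
    obtain ⟨α, β, δ, hsum⟩ := exists_eq_one_add_swapMatrix_add_coincidenceProj hab hM
    obtain ⟨V, hV, ha, hb⟩ := exists_mem_unitaryGroup_apply_ne_zero hab
    have hcomm : Commute (δ • coincidenceProj n) (V ⊗ₖ V) := by
      rw [← sub_eq_iff_eq_add'.mpr hsum]
      exact (hM V hV).sub_left (((Commute.one_left _).smul_left α).add_left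
        ((commute_swapMatrix_kronecker_self V).smul_left β))
    have hδ : δ = 0 := by
      by_contra hδ
      exact not_commute_coincidenceProj_kronecker_self hab ha hb
        ((Commute.smul_left_iff₀ hδ).mp hcomm)
    exact ⟨α, β, by rw [hsum, hδ, zero_smul, add_zero]⟩

end Commutant

section Twirl

open scoped Matrix.Norms.L2Operator

variable {n : Type*} [Fintype n] [DecidableEq n]

/-- The twirl `∫ (C ⊗ C)† A (C ⊗ C) dμ(C)` of an operator `A` on `ℂ^n ⊗ ℂ^n`, as a Bochner
integral; `twirl_apply` identifies it with the entrywise integral. -/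
noncomputable def twirl (μ : Measure (unitaryGroup n ℂ)) (A : Matrix (n × n) (n × n) ℂ) :
    Matrix (n × n) (n × n) ℂ :=
  ∫ C : unitaryGroup n ℂ, (C.1 ⊗ₖ C.1)ᴴ * A * (C.1 ⊗ₖ C.1) ∂μ

variable (μ : Measure (unitaryGroup n ℂ)) (A : Matrix (n × n) (n × n) ℂ)

theorem integrable_conjTranspose_kronecker_mul_mul [IsFiniteMeasure μ] :
    Integrable (fun C : unitaryGroup n ℂ => (C.1 ⊗ₖ C.1)ᴴ * A * (C.1 ⊗ₖ C.1)) μ := by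
  have hK : Continuous fun C : unitaryGroup n ℂ => C.1 ⊗ₖ C.1 :=
    continuous_matrix fun p q => by
      have h := continuous_subtype_val (p := (· ∈ unitaryGroup n ℂ))
      exact (h.matrix_elem p.1 q.1).mul (h.matrix_elem p.2 q.2)
  exact ((hK.matrix_conjTranspose.matrix_mul continuous_const).matrix_mul
    hK).integrable_of_hasCompactSupport (HasCompactSupport.of_compactSpace _)

theorem map_twirl [IsFiniteMeasure μ] (L : Module.Dual ℂ (Matrix (n × n) (n × n) ℂ)) :
    L (twirl μ A) = ∫ C : unitaryGroup n ℂ, L ((C.1 ⊗ₖ C.1)ᴴ * A * (C.1 ⊗ₖ C.1)) ∂μ :=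
  (L.toContinuousLinearMap.integral_comp_comm
    (integrable_conjTranspose_kronecker_mul_mul μ A)).symm

theorem twirl_apply [IsFiniteMeasure μ] (p q : n × n) :
    twirl μ A p q = ∫ C : unitaryGroup n ℂ, ((C.1 ⊗ₖ C.1)ᴴ * A * (C.1 ⊗ₖ C.1)) p q ∂μ :=
  map_twirl μ A (entryLinearMap ℂ ℂ p q)

theorem trace_twirl [IsProbabilityMeasure μ] : (twirl μ A).trace = A.trace := by
  have htrace (C : unitaryGroup n ℂ) : ((C.1 ⊗ₖ C.1)ᴴ * A * (C.1 ⊗ₖ C.1)).trace = A.trace := by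
    rw [trace_mul_cycle, ← star_eq_conjTranspose,
      mem_unitaryGroup_iff.mp (kronecker_mem_unitary C.2 C.2), one_mul]
  simpa [htrace] using map_twirl μ A (traceLinearMap (n × n) ℂ ℂ)

theorem twirl_mul_swapMatrix [IsFiniteMeasure μ] :
    twirl μ A * swapMatrix n ℂ = twirl μ (A * swapMatrix n ℂ) := by
  rw [twirl, twirl, ← integral_mul_const_of_integrable
    (integrable_conjTranspose_kronecker_mul_mul μ A)]
  simp only [mul_assoc, (commute_swapMatrix_kronecker_self _).eq]

theorem conjTranspose_kronecker_mul_twirl_mul [IsFiniteMeasure μ] [μ.IsMulRightInvariant]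
    (V : unitaryGroup n ℂ) : (V.1 ⊗ₖ V.1)ᴴ * twirl μ A * (V.1 ⊗ₖ V.1) = twirl μ A := by
  have hint := integrable_conjTranspose_kronecker_mul_mul μ A
  calc (V.1 ⊗ₖ V.1)ᴴ * twirl μ A * (V.1 ⊗ₖ V.1)
    _ = ∫ C : unitaryGroup n ℂ,
          (V.1 ⊗ₖ V.1)ᴴ * ((C.1 ⊗ₖ C.1)ᴴ * A * (C.1 ⊗ₖ C.1)) * (V.1 ⊗ₖ V.1) ∂μ := by
      rw [integral_mul_const_of_integrable (hint.const_mul _),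
        integral_const_mul_of_integrable hint, twirl]
    _ = ∫ C : unitaryGroup n ℂ, ((C * V).1 ⊗ₖ (C * V).1)ᴴ * A * ((C * V).1 ⊗ₖ (C * V).1) ∂μ := by
      simp only [Submonoid.coe_mul, mul_kronecker_mul, conjTranspose_mul, mul_assoc]
    _ = twirl μ A :=
      integral_mul_right_eq_self (fun C : unitaryGroup n ℂ => (C.1 ⊗ₖ C.1)ᴴ * A * (C.1 ⊗ₖ C.1)) V

theorem commute_twirl_kronecker_self [IsFiniteMeasure μ] [μ.IsMulRightInvariant] {V : Matrix n n ℂ}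
    (hV : V ∈ unitaryGroup n ℂ) : Commute (twirl μ A) (V ⊗ₖ V) := by
  have hVV : (V ⊗ₖ V) * (V ⊗ₖ V)ᴴ = 1 := mem_unitaryGroup_iff.mp (kronecker_mem_unitary hV hV)
  calc twirl μ A * (V ⊗ₖ V)
    _ = (V ⊗ₖ V) * ((V ⊗ₖ V)ᴴ * twirl μ A * (V ⊗ₖ V)) := by
      rw [mul_assoc, ← mul_assoc, hVV, one_mul]
    _ = (V ⊗ₖ V) * twirl μ A := by
      rw [conjTranspose_kronecker_mul_twirl_mul μ A ⟨V, hV⟩]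

theorem smul_twirl_of_mul_swapMatrix_eq_self [IsProbabilityMeasure μ] [μ.IsMulRightInvariant]
    (hA : A * swapMatrix n ℂ = A) :
    ((Fintype.card n : ℂ) * (Fintype.card n + 1)) • twirl μ A =
      A.trace • (1 + swapMatrix n ℂ) := by
  obtain ⟨α, β, hαβ⟩ := exists_eq_one_add_swapMatrix_of_commute_kronecker_self
    fun _ => commute_twirl_kronecker_self μ A
  have hswap : twirl μ A * swapMatrix n ℂ = twirl μ A := by rw [twirl_mul_swapMatrix, hA]
  have hsym : (2 : ℂ) • twirl μ A = (α + β) • (1 + swapMatrix n ℂ) := by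
    rw [two_smul]
    nth_rewrite 2 [← hswap]
    rw [hαβ, add_mul, smul_mul_assoc, smul_mul_assoc, one_mul, swapMatrix_mul_self]
    module
  have htrace : 2 * A.trace = (α + β) * (Fintype.card n * (Fintype.card n + 1)) := by
    have h := congrArg trace hsym
    simp only [trace_smul, trace_add, trace_one, trace_swapMatrix, trace_twirl, Fintype.card_prod,
      smul_eq_mul] at h
    rw [h]
    push_cast
    ring
  refine smul_right_injective _ (two_ne_zero (α := ℂ)) ?_
  calc (2 : ℂ) • ((Fintype.card n : ℂ) * (Fintype.card n + 1)) • twirl μ A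
    _ = ((Fintype.card n : ℂ) * (Fintype.card n + 1)) • (2 : ℂ) • twirl μ A := smul_comm ..
    _ = (2 : ℂ) • A.trace • (1 + swapMatrix n ℂ) := by
      rw [hsym, smul_smul, smul_smul, htrace, mul_comm]

end Twirl

theorem PiEq_mul_swapMatrix (d : ℕ) : PiEq d * swapMatrix (Fin d) ℂ = PiEq d := by
  rw [mul_swapMatrix]
  ext p q
  simp only [PiEq, submatrix_apply, of_apply]
  grind

theorem trace_PiEq (d : ℕ) : (PiEq d).trace = d := by
  simp only [trace, diag_apply, PiEq, of_apply, Fintype.sum_prod_type, ite_and]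
  simp

theorem two_smul_PiSym (d : ℕ) : (2 : ℂ) • PiSym d = 1 + swapMatrix (Fin d) ℂ := by
  have hswap : SwapF d = swapMatrix (Fin d) ℂ := by
    ext p q
    simp only [SwapF, of_apply, swapMatrix_apply, Prod.ext_iff]
    grind
  rw [PiSym, smul_smul, hswap]
  norm_num

/-- `∫_{U(d)} (C ⊗ C)† · Π^eq · (C ⊗ C) dμ_d(C) = (2/(d+1)) · Π^sym`, where
`μ_d` is the Haar probability measure on the unitary group `U(d)` and the matrix-valued
integral is taken entrywise. -/
theorem haar_twirl_PiEq (d : ℕ) (hd : 0 < d)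
    (μ : Measure (Matrix.unitaryGroup (Fin d) ℂ))
    [μ.IsHaarMeasure] [IsProbabilityMeasure μ] :
    (Matrix.of fun p q =>
        ∫ C : Matrix.unitaryGroup (Fin d) ℂ,
          ((((C : Matrix (Fin d) (Fin d) ℂ) ⊗ₖ (C : Matrix (Fin d) (Fin d) ℂ))ᴴ *
              PiEq d *
              ((C : Matrix (Fin d) (Fin d) ℂ) ⊗ₖ (C : Matrix (Fin d) (Fin d) ℂ))) p q) ∂μ)
      = ((2 : ℂ) / ((d : ℂ) + 1)) • PiSym d := by
  have := isMulRightInvariant_of_isHaarMeasure_of_isProbabilityMeasure μ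
  have hd₀ : (d : ℂ) ≠ 0 := Nat.cast_ne_zero.mpr hd.ne'
  have hd₁ : (d : ℂ) + 1 ≠ 0 := Nat.cast_add_one_ne_zero d
  have hscaled := smul_twirl_of_mul_swapMatrix_eq_self μ (PiEq d) (PiEq_mul_swapMatrix d)
  rw [Fintype.card_fin, trace_PiEq, ← two_smul_PiSym, mul_smul] at hscaled
  have htwirl : twirl μ (PiEq d) = ((2 : ℂ) / ((d : ℂ) + 1)) • PiSym d := by
    rw [← inv_mul_eq_div, mul_smul, eq_inv_smul_iff₀ hd₁]
    exact smul_right_injective _ hd₀ hscaled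
  rw [← htwirl]
  ext p q
  exact (twirl_apply μ (PiEq d) p q).symm
end

section
/- For every positive integer d, (∫_{U(d)} (C ⊗ C)† · Π^eq · (C ⊗ C) dμ_d(C))^{T2} − Π^EPR = (1/(d+1)) · (I − Π^EPR). -/
open Matrix MeasureTheory
open scoped Kronecker

/-- `Π^EPR = |φ⟩⟨φ|` with `|φ⟩ = (1/√d) Σ_x |x,x⟩`. -/
noncomputable def PiEPR (d : ℕ) : Matrix (Fin d × Fin d) (Fin d × Fin d) ℂ :=
  Matrix.of fun p q => if p.1 = p.2 ∧ q.1 = q.2 then 1 / (d : ℂ) else 0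

/-- The partial transpose: `(O^{T2})_{(x,z),(y,w)} = O_{(x,w),(y,z)}`. -/
def ptrans {d : ℕ} (O : Matrix (Fin d × Fin d) (Fin d × Fin d) ℂ) :
    Matrix (Fin d × Fin d) (Fin d × Fin d) ℂ :=
  Matrix.of fun p q => O (p.1, q.2) (q.1, p.2)

/-!
The twirl `T` of an operator `A` commutes with every `V ⊗ V`, so by Schur–Weyl duality for tensor
squares it is a combination of the identity and the flip `F`. If `A F = A`, as for `Π^eq`, then also
`T F = T`, which forces `T = c (1 + F)`, and comparing traces gives `c = tr A / (d (d + 1))`.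
Finally the partial transpose fixes the identity and sends `F` to `d Π^EPR`.

For the duality, diagonal and permutation unitaries `V` leave undetermined only the relation
between the diagonal entries `X (a, a) (a, a)` and the others. It comes from `S ⊗ 1 + 1 ⊗ S`, for
a transposition `S`, which is a combination of `1`, `S ⊗ S` and `√S ⊗ √S`.
-/

namespace HaarTwirl

section TensorFlip

variable {n R : Type*} [DecidableEq n]

variable (n R) in
/-- The flip operator `|x,y⟩ ↦ |y,x⟩` on `Rⁿ ⊗ Rⁿ`, a symmetry of every operator `V ⊗ V`. -/
def tensorFlip [Zero R] [One R] : Matrix (n × n) (n × n) R :=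
  Equiv.Perm.permMatrix R (Equiv.prodComm n n)

theorem tensorFlip_apply [Zero R] [One R] (p q : n × n) :
    tensorFlip n R p q = if p.swap = q then 1 else 0 := by
  simp [tensorFlip, PEquiv.toMatrix_apply, Equiv.toPEquiv_apply, eq_comm]

variable [Fintype n] {m : Type*}

theorem mul_tensorFlip_apply [NonAssocSemiring R] (X : Matrix m (n × n) R) (i : m) (q : n × n) :
    (X * tensorFlip n R) i q = X i q.swap := by
  rw [tensorFlip, PEquiv.mul_toMatrix_toPEquiv]
  rfl

theorem tensorFlip_mul_apply [NonAssocSemiring R] (X : Matrix (n × n) m R) (p : n × n) (j : m) :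
    (tensorFlip n R * X) p j = X p.swap j := by
  rw [tensorFlip, PEquiv.toMatrix_toPEquiv_mul]
  rfl

theorem tensorFlip_mul_self [NonAssocSemiring R] : tensorFlip n R * tensorFlip n R = 1 := by
  ext p q
  simp [mul_tensorFlip_apply, tensorFlip_apply, Matrix.one_apply]

theorem commute_kronecker_self_tensorFlip [CommSemiring R] (V : Matrix n n R) :
    Commute (V ⊗ₖ V) (tensorFlip n R) := by
  ext p q
  rw [mul_tensorFlip_apply, tensorFlip_mul_apply]
  exact mul_comm _ _

theorem trace_tensorFlip [NonAssocSemiring R] : (tensorFlip n R).trace = Fintype.card n := by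
  simp only [Matrix.trace, Matrix.diag_apply, tensorFlip_apply, Fintype.sum_prod_type,
    Prod.ext_iff, Prod.swap]
  simp [ite_and]

end TensorFlip

section UnitaryElements

variable {n R : Type*} [DecidableEq n]

theorem permMatrix_kronecker_permMatrix [MulZeroOneClass R] (σ τ : Equiv.Perm n) :
    σ.permMatrix R ⊗ₖ τ.permMatrix R = Equiv.Perm.permMatrix R (σ.prodCongr τ) := by
  ext p q
  simp [PEquiv.toMatrix_apply, Equiv.toPEquiv_apply, Prod.ext_iff, ← ite_and, and_comm]

theorem permMatrix_mem_unitaryGroup [Fintype n] [CommRing R] [StarRing R] (σ : Equiv.Perm n) :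
    σ.permMatrix R ∈ Matrix.unitaryGroup n R := by
  rw [Matrix.mem_unitaryGroup_iff, Matrix.star_eq_conjTranspose, Matrix.conjTranspose_permMatrix,
    ← Matrix.permMatrix_mul, inv_mul_cancel, Matrix.permMatrix_one]

theorem diagonal_mem_unitaryGroup [Fintype n] {𝕜 : Type*} [RCLike 𝕜] {t : n → 𝕜}
    (ht : ∀ i, ‖t i‖ = 1) : Matrix.diagonal t ∈ Matrix.unitaryGroup n 𝕜 := by
  rw [Matrix.mem_unitaryGroup_iff, Matrix.star_eq_conjTranspose, Matrix.diagonal_conjTranspose,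
    Matrix.diagonal_mul_diagonal, Matrix.diagonal_eq_one]
  ext i
  simp [RCLike.mul_conj, ht]

-- This unitary is a square root of `s`, so that its tensor square has cross terms `s ⊗ 1 + 1 ⊗ s`.
theorem smul_one_add_smul_mem_unitary [Ring R] [StarRing R] [Algebra ℂ R] [StarModule ℂ R]
    {s : R} (hs : IsSelfAdjoint s) (hs2 : s * s = 1) :
    ((1 + Complex.I) / 2) • (1 : R) + ((1 - Complex.I) / 2) • s ∈ unitary R := by
  rw [Unitary.mem_iff]
  simp only [star_add, star_smul, star_one, hs.star_eq, mul_add, add_mul, smul_mul_smul_comm,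
    mul_one, one_mul, hs2, Complex.star_def, map_div₀, map_add, map_sub, map_one, map_ofNat,
    Complex.conj_I, sub_neg_eq_add, ← sub_eq_add_neg]
  constructor <;> (match_scalars <;> grind [Complex.I_sq])

end UnitaryElements

section TensorSquareCommutant

variable {n : Type*} [Fintype n] [DecidableEq n] {X : Matrix (n × n) (n × n) ℂ}

theorem apply_prodMap_perm (hX : ∀ V ∈ Matrix.unitaryGroup n ℂ, Commute X (V ⊗ₖ V))
    (σ : Equiv.Perm n) (p q : n × n) : X (p.map σ σ) (q.map σ σ) = X p q := by
  have h := congrFun₂ (hX _ (permMatrix_mem_unitaryGroup σ)) p (q.map σ σ)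
  rw [permMatrix_kronecker_permMatrix, PEquiv.mul_toMatrix_toPEquiv,
    PEquiv.toMatrix_toPEquiv_mul] at h
  simpa [Prod.map_map] using h.symm

theorem apply_eq_zero_of_sym2_ne (hX : ∀ V ∈ Matrix.unitaryGroup n ℂ, Commute X (V ⊗ₖ V))
    {a b c e : n} (h : s(a, b) ≠ s(c, e)) : X (a, b) (c, e) = 0 := by
  by_contra hne
  let t (k i : n) : ℂ := if i = k then Complex.I else 1
  have ht (k : n) : Matrix.diagonal (t k) ∈ Matrix.unitaryGroup n ℂ :=
    diagonal_mem_unitaryGroup fun i => by by_cases hi : i = k <;> simp [t, hi]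
  have h_phase (k : n) : t k a * t k b = t k c * t k e := by
    have hk := congrFun₂ (hX _ (ht k)) (a, b) (c, e)
    rw [Matrix.diagonal_kronecker_diagonal, Matrix.mul_diagonal, Matrix.diagonal_mul,
      mul_comm] at hk
    exact (mul_right_cancel₀ hne hk).symm
  -- `t k a * t k b` is `I` to the number of occurrences of `k` among `a, b`.
  have h_phase_a := h_phase a
  have h_phase_b := h_phase b
  simp only [t] at h_phase_a h_phase_b
  have h_I_ne_one : Complex.I ≠ 1 := by simp [Complex.ext_iff]
  have h_I_ne_neg_one : Complex.I ≠ -1 := by simp [Complex.ext_iff]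
  rw [Ne, Sym2.eq_iff] at h
  grind [Complex.I_mul_I]

theorem commute_kronecker_one_add_one_kronecker
    (hX : ∀ V ∈ Matrix.unitaryGroup n ℂ, Commute X (V ⊗ₖ V))
    {S : Matrix n n ℂ} (hS : S.IsHermitian) (hS2 : S * S = 1) :
    Commute X (S ⊗ₖ 1 + 1 ⊗ₖ S) := by
  have hV := hX _ (smul_one_add_smul_mem_unitary hS hS2)
  have hS' := hX S ((Matrix.mem_unitaryGroup_iff).mpr (by rw [hS.isSelfAdjoint.star_eq, hS2]))
  set V := ((1 + Complex.I) / 2) • (1 : Matrix n n ℂ) + ((1 - Complex.I) / 2) • S with hV_def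
  have h_eq : S ⊗ₖ 1 + 1 ⊗ₖ S = (2 : ℂ) • V ⊗ₖ V - Complex.I • 1 + Complex.I • S ⊗ₖ S := by
    simp only [hV_def, Matrix.add_kronecker, Matrix.kronecker_add, Matrix.smul_kronecker,
      Matrix.kronecker_smul, Matrix.one_kronecker_one]
    match_scalars <;> grind [Complex.I_sq]
  rw [h_eq]
  exact ((hV.smul_right 2).sub_right ((Commute.one_right X).smul_right Complex.I)).add_right
    (hS'.smul_right Complex.I)

theorem apply_diag_eq_add (hX : ∀ V ∈ Matrix.unitaryGroup n ℂ, Commute X (V ⊗ₖ V))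
    {a b : n} (hab : a ≠ b) : X (a, a) (a, a) = X (a, b) (a, b) + X (a, b) (b, a) := by
  have hS : (Matrix.swap ℂ a b).IsHermitian := Matrix.conjTranspose_swap a b
  have h := congrFun₂ (commute_kronecker_one_add_one_kronecker hX hS
    (Matrix.swap_mul_self a b)) (a, b) (a, a)
  rw [Matrix.swap, ← Matrix.permMatrix_refl, permMatrix_kronecker_permMatrix,
    permMatrix_kronecker_permMatrix, Matrix.mul_add, Matrix.add_mul, Matrix.add_apply,
    Matrix.add_apply] at h
  simp only [PEquiv.mul_toMatrix_toPEquiv, PEquiv.toMatrix_toPEquiv_mul] at h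
  have h_zero : X (b, b) (a, a) = 0 := apply_eq_zero_of_sym2_ne hX (by simp [hab.symm])
  simpa [h_zero, add_comm] using h.symm

theorem exists_eq_smul_one_add_smul_tensorFlip
    (hX : ∀ V ∈ Matrix.unitaryGroup n ℂ, Commute X (V ⊗ₖ V)) :
    ∃ α β : ℂ, X = α • 1 + β • tensorFlip n ℂ := by
  rcases subsingleton_or_nontrivial n with hn | hn
  · refine ⟨X.trace, 0, ?_⟩
    ext p q
    obtain rfl := Subsingleton.elim p q
    simp [Matrix.trace, Fintype.sum_subsingleton _ p]
  obtain ⟨a₀, b₀, h₀⟩ := exists_pair_ne n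
  have h_offdiag {a b : n} (hab : a ≠ b) : X (a, b) (a, b) = X (a₀, b₀) (a₀, b₀) ∧
      X (a, b) (b, a) = X (a₀, b₀) (b₀, a₀) := by
    obtain ⟨σ, rfl, rfl⟩ := MulAction.is_two_pretransitive_iff.mp
      (Equiv.Perm.isMultiplyPretransitive n 2) h₀ hab
    exact ⟨apply_prodMap_perm hX σ (a₀, b₀) (a₀, b₀), apply_prodMap_perm hX σ (a₀, b₀) (b₀, a₀)⟩
  refine ⟨X (a₀, b₀) (a₀, b₀), X (a₀, b₀) (b₀, a₀), ?_⟩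
  ext ⟨a, b⟩ ⟨c, e⟩
  simp only [Matrix.add_apply, Matrix.smul_apply, Matrix.one_apply, tensorFlip_apply, Prod.swap,
    Prod.mk.injEq, smul_eq_mul]
  by_cases h : s(a, b) = s(c, e)
  · by_cases hab : a = b
    · obtain ⟨b', hb'⟩ := exists_ne a
      have := apply_diag_eq_add hX hb'.symm
      have := h_offdiag hb'.symm
      rw [Sym2.eq_iff] at h
      grind
    · obtain ⟨rfl, rfl⟩ | ⟨rfl, rfl⟩ := Sym2.eq_iff.mp h
      · simp [h_offdiag hab, hab]
      · simp [h_offdiag hab, hab]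
  · rw [apply_eq_zero_of_sym2_ne hX h]
    rw [Sym2.eq_iff] at h
    grind

end TensorSquareCommutant

section UnitaryHaar

open scoped Matrix.Norms.Elementwise in
instance compactSpace_unitaryGroup (n 𝕜 : Type*) [Fintype n] [DecidableEq n] [RCLike 𝕜] :
    CompactSpace (Matrix.unitaryGroup n 𝕜) := by
  have := FiniteDimensional.proper 𝕜 (Matrix n n 𝕜)
  have h_closed : IsClosed (Matrix.unitaryGroup n 𝕜 : Set (Matrix n n 𝕜)) := isClosed_unitary
  refine isCompact_iff_compactSpace.mp (Metric.isCompact_of_isClosed_isBounded h_closed ?_)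
  exact isBounded_iff_forall_norm_le.mpr ⟨1, fun _ => entrywise_sup_norm_bound_of_unitary⟩

theorem isMulRightInvariant_of_compactSpace {G : Type*} [Group G] [TopologicalSpace G]
    [IsTopologicalGroup G] [CompactSpace G] [MeasurableSpace G] [BorelSpace G]
    (μ : Measure G) [μ.IsHaarMeasure] : μ.IsMulRightInvariant where
  map_mul_right_eq_self g := by
    obtain ⟨c, h_smul⟩ : ∃ c : NNReal, μ.map (· * g) = c • μ :=
      ⟨_, Measure.isMulInvariant_eq_smul_of_compactSpace _ μ⟩
    have h_univ : (c : ENNReal) * μ Set.univ = 1 * μ Set.univ := by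
      rw [← smul_eq_mul, ← ENNReal.smul_def, ← Measure.smul_apply, ← h_smul,
        Measure.map_apply (measurable_mul_const g) .univ, Set.preimage_univ, one_mul]
    have h_ne_zero : μ Set.univ ≠ 0 := Measure.measure_univ_ne_zero.mpr (NeZero.ne μ)
    have hc : c = 1 :=
      mod_cast (ENNReal.mul_left_inj h_ne_zero (measure_ne_top μ Set.univ)).mp h_univ
    rw [h_smul, hc, one_smul]

end UnitaryHaar

section Twirl

open scoped Matrix.Norms.L2Operator

variable {n : Type*} [Fintype n] [DecidableEq n]

theorem continuous_conj_kronecker (A : Matrix (n × n) (n × n) ℂ) :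
    Continuous fun C : Matrix.unitaryGroup n ℂ => (C.1 ⊗ₖ C.1)ᴴ * A * (C.1 ⊗ₖ C.1) := by
  have h : Continuous fun C : Matrix.unitaryGroup n ℂ => C.1 ⊗ₖ C.1 :=
    continuous_matrix fun p q => (continuous_subtype_val.matrix_elem p.1 q.1).mul
      (continuous_subtype_val.matrix_elem p.2 q.2)
  exact (h.matrix_conjTranspose.matrix_mul continuous_const).matrix_mul h

variable (μ : Measure (Matrix.unitaryGroup n ℂ))

theorem integrable_conj_kronecker [IsFiniteMeasure μ] (A : Matrix (n × n) (n × n) ℂ) :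
    Integrable (fun C : Matrix.unitaryGroup n ℂ => (C.1 ⊗ₖ C.1)ᴴ * A * (C.1 ⊗ₖ C.1)) μ :=
  (continuous_conj_kronecker A).integrable_of_hasCompactSupport (.of_compactSpace _)

/-- The twirl `∫ (C ⊗ C)† A (C ⊗ C) dμ(C)` of an operator on `ℂⁿ ⊗ ℂⁿ`, as a Bochner integral for
the operator norm; for finite `μ` this is the entrywise integral, see `twirl_apply`. -/
noncomputable def twirl (A : Matrix (n × n) (n × n) ℂ) : Matrix (n × n) (n × n) ℂ :=
  ∫ C : Matrix.unitaryGroup n ℂ, (C.1 ⊗ₖ C.1)ᴴ * A * (C.1 ⊗ₖ C.1) ∂μ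

theorem map_twirl [IsFiniteMeasure μ] {E : Type*} [NormedAddCommGroup E] [NormedSpace ℂ E]
    [CompleteSpace E] (L : Matrix (n × n) (n × n) ℂ →ₗ[ℂ] E) (A : Matrix (n × n) (n × n) ℂ) :
    L (twirl μ A) = ∫ C : Matrix.unitaryGroup n ℂ, L ((C.1 ⊗ₖ C.1)ᴴ * A * (C.1 ⊗ₖ C.1)) ∂μ :=
  (L.toContinuousLinearMap.integral_comp_comm (integrable_conj_kronecker μ A)).symm

theorem twirl_apply [IsFiniteMeasure μ] (A : Matrix (n × n) (n × n) ℂ) (p q : n × n) :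
    twirl μ A p q = ∫ C : Matrix.unitaryGroup n ℂ, ((C.1 ⊗ₖ C.1)ᴴ * A * (C.1 ⊗ₖ C.1)) p q ∂μ :=
  map_twirl μ (Matrix.entryLinearMap ℂ ℂ p q) A

theorem trace_twirl [IsProbabilityMeasure μ] (A : Matrix (n × n) (n × n) ℂ) :
    (twirl μ A).trace = A.trace := by
  have h_trace (C : Matrix.unitaryGroup n ℂ) :
      ((C.1 ⊗ₖ C.1)ᴴ * A * (C.1 ⊗ₖ C.1)).trace = A.trace := by
    rw [Matrix.trace_mul_cycle, ← Matrix.star_eq_conjTranspose,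
      (Unitary.mem_iff.mp (Matrix.kronecker_mem_unitary C.2 C.2)).2, Matrix.one_mul]
  simpa [h_trace] using map_twirl μ (Matrix.traceLinearMap (n × n) ℂ ℂ) A

theorem twirl_mul_tensorFlip [IsFiniteMeasure μ] (A : Matrix (n × n) (n × n) ℂ) :
    twirl μ A * tensorFlip n ℂ = twirl μ (A * tensorFlip n ℂ) := by
  have h := map_twirl μ (LinearMap.mulRight ℂ (tensorFlip n ℂ)) A
  simpa only [LinearMap.mulRight_apply, twirl, Matrix.mul_assoc,
    (commute_kronecker_self_tensorFlip _).eq] using h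

theorem commute_twirl_kronecker [IsFiniteMeasure μ] [μ.IsMulRightInvariant]
    (A : Matrix (n × n) (n × n) ℂ) {V : Matrix n n ℂ} (hV : V ∈ Matrix.unitaryGroup n ℂ) :
    Commute (twirl μ A) (V ⊗ₖ V) := by
  have h_conj : (V ⊗ₖ V)ᴴ * twirl μ A * (V ⊗ₖ V) = twirl μ A := by
    have h_map := map_twirl μ
      (LinearMap.mulRight ℂ (V ⊗ₖ V) ∘ₗ LinearMap.mulLeft ℂ (V ⊗ₖ V)ᴴ) A
    have h_shift := integral_mul_right_eq_self (μ := μ)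
      (fun C : Matrix.unitaryGroup n ℂ => (C.1 ⊗ₖ C.1)ᴴ * A * (C.1 ⊗ₖ C.1)) ⟨V, hV⟩
    simp only [Submonoid.coe_mul, Matrix.mul_kronecker_mul, Matrix.conjTranspose_mul] at h_shift
    simp only [LinearMap.comp_apply, LinearMap.mulRight_apply, LinearMap.mulLeft_apply] at h_map
    rw [h_map, twirl, ← h_shift]
    simp only [Matrix.mul_assoc]
  have h_unit := (Unitary.mem_iff.mp (Matrix.kronecker_mem_unitary hV hV)).2
  rw [Matrix.star_eq_conjTranspose] at h_unit
  calc twirl μ A * (V ⊗ₖ V) = ((V ⊗ₖ V) * (V ⊗ₖ V)ᴴ) * twirl μ A * (V ⊗ₖ V) := by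
        rw [h_unit, Matrix.one_mul]
    _ = (V ⊗ₖ V) * ((V ⊗ₖ V)ᴴ * twirl μ A * (V ⊗ₖ V)) := by simp only [Matrix.mul_assoc]
    _ = (V ⊗ₖ V) * twirl μ A := by rw [h_conj]

theorem twirl_eq_of_mul_tensorFlip [IsProbabilityMeasure μ] [μ.IsMulRightInvariant]
    {A : Matrix (n × n) (n × n) ℂ} (hA : A * tensorFlip n ℂ = A) :
    twirl μ A = (A.trace / (Fintype.card n * (Fintype.card n + 1))) • (1 + tensorFlip n ℂ) := by
  rcases isEmpty_or_nonempty n with hn | hn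
  · exact Subsingleton.elim _ _
  obtain ⟨α, β, h⟩ := exists_eq_smul_one_add_smul_tensorFlip fun V hV =>
    commute_twirl_kronecker μ A hV
  have h_flip : twirl μ A * tensorFlip n ℂ = twirl μ A := by rw [twirl_mul_tensorFlip, hA]
  have h_sym : twirl μ A = ((α + β) / 2) • (1 + tensorFlip n ℂ) := by
    have h_swapped : twirl μ A = α • tensorFlip n ℂ + β • 1 := by
      rw [← h_flip, h, add_mul, smul_mul_assoc, smul_mul_assoc, tensorFlip_mul_self, one_mul]
    calc twirl μ A = (1 / 2 : ℂ) • (twirl μ A + twirl μ A) := by module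
      _ = (1 / 2 : ℂ) • ((α • 1 + β • tensorFlip n ℂ) + (α • tensorFlip n ℂ + β • 1)) :=
        congrArg ((1 / 2 : ℂ) • ·) (congrArg₂ (· + ·) h h_swapped)
      _ = ((α + β) / 2) • (1 + tensorFlip n ℂ) := by module
  have h_trace : A.trace = (α + β) / 2 * (Fintype.card n * (Fintype.card n + 1)) := by
    rw [← trace_twirl μ A, h_sym, Matrix.trace_smul, Matrix.trace_add, Matrix.trace_one,
      trace_tensorFlip, Fintype.card_prod, smul_eq_mul]
    push_cast
    ring
  have h_card : (Fintype.card n : ℂ) ≠ 0 := Nat.cast_ne_zero.mpr Fintype.card_ne_zero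
  have h_card_add : (Fintype.card n + 1 : ℂ) ≠ 0 := Nat.cast_add_one_ne_zero _
  rw [h_sym, h_trace, mul_div_cancel_right₀ _ (mul_ne_zero h_card h_card_add)]

end Twirl

section PartialTranspose

variable {d : ℕ}

theorem trace_PiEq : (PiEq d).trace = d := by
  simp only [Matrix.trace, Matrix.diag_apply, PiEq, Matrix.of_apply, Fintype.sum_prod_type]
  simp

theorem PiEq_mul_tensorFlip : PiEq d * tensorFlip (Fin d) ℂ = PiEq d := by
  ext p q
  rw [mul_tensorFlip_apply]
  simp only [PiEq, Matrix.of_apply, Prod.fst_swap, Prod.snd_swap]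
  grind

theorem ptrans_smul (c : ℂ) (O : Matrix (Fin d × Fin d) (Fin d × Fin d) ℂ) :
    ptrans (c • O) = c • ptrans O :=
  rfl

theorem ptrans_add (O O' : Matrix (Fin d × Fin d) (Fin d × Fin d) ℂ) :
    ptrans (O + O') = ptrans O + ptrans O' :=
  rfl

theorem ptrans_one : ptrans (1 : Matrix (Fin d × Fin d) (Fin d × Fin d) ℂ) = 1 := by
  ext p q
  simp [ptrans, Matrix.one_apply, Prod.ext_iff, eq_comm]

theorem ptrans_tensorFlip : ptrans (tensorFlip (Fin d) ℂ) = (d : ℂ) • PiEPR d := by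
  ext p q
  have hd : (d : ℂ) ≠ 0 := Nat.cast_ne_zero.mpr p.1.pos.ne'
  simp [ptrans, tensorFlip_apply, PiEPR, Prod.ext_iff, hd, and_comm, eq_comm]

end PartialTranspose

end HaarTwirl

/-- `(∫_{U(d)} (C ⊗ C)† · Π^eq · (C ⊗ C) dμ_d(C))^{T2} − Π^EPR
= (1/(d+1)) · (I − Π^EPR)`, where `μ_d` is the Haar probability measure on `U(d)` and the
matrix-valued integral is taken entrywise. -/
theorem haar_twirl_PiEq_partialTranspose (d : ℕ) (hd : 0 < d)
    (μ : Measure (Matrix.unitaryGroup (Fin d) ℂ))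
    [μ.IsHaarMeasure] [IsProbabilityMeasure μ] :
    ptrans
        (Matrix.of fun p q =>
          ∫ C : Matrix.unitaryGroup (Fin d) ℂ,
            ((((C : Matrix (Fin d) (Fin d) ℂ) ⊗ₖ (C : Matrix (Fin d) (Fin d) ℂ))ᴴ *
                PiEq d *
                ((C : Matrix (Fin d) (Fin d) ℂ) ⊗ₖ (C : Matrix (Fin d) (Fin d) ℂ))) p q) ∂μ)
        - PiEPR d
      = ((1 : ℂ) / ((d : ℂ) + 1)) •
          ((1 : Matrix (Fin d × Fin d) (Fin d × Fin d) ℂ) - PiEPR d) := by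
  have := HaarTwirl.isMulRightInvariant_of_compactSpace μ
  have h_entries : (Matrix.of fun p q =>
      ∫ C : Matrix.unitaryGroup (Fin d) ℂ,
        ((C.1 ⊗ₖ C.1)ᴴ * PiEq d * (C.1 ⊗ₖ C.1)) p q ∂μ) = HaarTwirl.twirl μ (PiEq d) := by
    ext p q
    exact (HaarTwirl.twirl_apply μ (PiEq d) p q).symm
  have h_coeff : (d : ℂ) / (d * (d + 1)) = 1 / (d + 1) := by
    have hd' : (d : ℂ) ≠ 0 := Nat.cast_ne_zero.mpr hd.ne'
    field_simp
  have h_d : (d + 1 : ℂ) ≠ 0 := Nat.cast_add_one_ne_zero d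
  rw [h_entries, HaarTwirl.twirl_eq_of_mul_tensorFlip μ HaarTwirl.PiEq_mul_tensorFlip,
    HaarTwirl.ptrans_smul, HaarTwirl.ptrans_add, HaarTwirl.ptrans_one,
    HaarTwirl.ptrans_tensorFlip, HaarTwirl.trace_PiEq, Fintype.card_fin, h_coeff]
  match_scalars <;> field_simp
  ring
end

section
/- Let d ≥ 3 be an integer and let f₁, f₂, f₃ range independently and uniformly over all functions Fin d → Fin d. Then E_{f₁,f₂,f₃}[(Z_{f₃} H_d Z_{f₂} H_d Z_{f₁})^{⊗2} · Π^eq · ((Z_{f₃} H_d Z_{f₂} H_d Z_{f₁})^{⊗2})†] = ((2d−1)/d²) · Π^eq + ((2d−2)/d²) · (Π^sym − Π^eq). -/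
open Matrix
open scoped Kronecker

/-- `ω_d = exp(2πi/d)`. -/
noncomputable def omegaC (d : ℕ) : ℂ := Complex.exp (2 * Real.pi * Complex.I / d)

/-- The diagonal phase matrix `Z_f` with `(Z_f)_{x,x} = ω_d^{f(x)}`. -/
noncomputable def Zmat (d : ℕ) (f : Fin d → Fin d) : Matrix (Fin d) (Fin d) ℂ :=
  Matrix.diagonal fun x => omegaC d ^ (f x : ℕ)

/-- The discrete Fourier transform matrix, `(H_d)_{y,x} = ω_d^{x·y}/√d`. -/
noncomputable def Hmat (d : ℕ) : Matrix (Fin d) (Fin d) ℂ :=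
  Matrix.of fun y x => omegaC d ^ ((x : ℕ) * (y : ℕ)) / (Real.sqrt d : ℂ)

/-- `Z_{f₃} H_d Z_{f₂} H_d Z_{f₁}`. -/
noncomputable def threeFold (d : ℕ) (f₁ f₂ f₃ : Fin d → Fin d) : Matrix (Fin d) (Fin d) ℂ :=
  Zmat d f₃ * Hmat d * Zmat d f₂ * Hmat d * Zmat d f₁

/-!
Write `T_U M = (U ⊗ U) M (U ⊗ U)†`, and let `𝒫` be the average of `T_{Z_f}` over all `f`. By
orthogonality of characters, `𝒫` keeps the entries `⟨p|M|q⟩` for which the pairs `p` and `q` agree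
up to order and erases all others; an entry survives when every multiplicity difference vanishes
modulo `d`, and these are at most `2` in absolute value, which is where `d ≥ 3` enters. So `𝒫`
fixes `Π^eq` and `Π^sym`. If the entries of `U` all have squared modulus `1/d`, the surviving
entries of `T_U Π^eq` are all `1/d`, that is `𝒫 T_U Π^eq = (1/d) (2 Π^sym - Π^eq)`. Since `T_V`
fixes `Π^sym` for unitary `V`, applying `𝒫 T_V` to this gives
`(1/d) (2 Π^sym - (1/d) (2 Π^sym - Π^eq))`, which is the claim.
-/

section RootsOfUnity

variable {K : Type*} [Field K] {ζ : K} {d : ℕ}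

lemma sum_pow_div_pow_of_isPrimitiveRoot (hζ : IsPrimitiveRoot ζ d) {a b : ℕ} (ha : a < d)
    (hb : b < d) :
    ∑ y : Fin d, (ζ ^ (y : ℕ)) ^ a / (ζ ^ (y : ℕ)) ^ b = if a = b then (d : K) else 0 := by
  have hζ0 : ζ ≠ 0 := hζ.ne_zero (by lia)
  have hterm (y : ℕ) : (ζ ^ y) ^ a / (ζ ^ y) ^ b = (ζ ^ a / ζ ^ b) ^ y := by
    rw [div_pow, pow_right_comm, pow_right_comm ζ y b]
  split_ifs with hab
  · simp [hab, hζ0]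
  · have hne : ζ ^ a / ζ ^ b ≠ 1 := fun h =>
      hab (hζ.pow_inj ha hb ((div_eq_one_iff_eq (pow_ne_zero b hζ0)).1 h))
    have hpow : (ζ ^ a / ζ ^ b) ^ d = 1 := by
      rw [div_pow, pow_right_comm, pow_right_comm ζ b d, hζ.pow_eq_one, one_pow, one_pow, div_one]
    simp only [hterm]
    rw [Fin.sum_univ_eq_sum_range fun y => (ζ ^ a / ζ ^ b) ^ y, geom_sum_eq hne, hpow, sub_self,
      zero_div]

lemma sum_prod_map_div_prod_map_of_isPrimitiveRoot {α : Type*} [Fintype α] [DecidableEq α]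
    (hζ : IsPrimitiveRoot ζ d) {s t : Multiset α} (hs : s.card < d) (ht : t.card < d) :
    ∑ f : α → Fin d,
        (s.map fun x => ζ ^ (f x : ℕ)).prod / (t.map fun x => ζ ^ (f x : ℕ)).prod =
      if s = t then (d : K) ^ Fintype.card α else 0 := by
  have hprod (u : Multiset α) (f : α → Fin d) :
      (u.map fun x => ζ ^ (f x : ℕ)).prod = ∏ x, (ζ ^ (f x : ℕ)) ^ u.count x := by
    rw [Finset.prod_multiset_map_count]
    exact Finset.prod_subset (Finset.subset_univ _) fun x _ hx => by
      rw [Multiset.count_eq_zero_of_notMem (by simpa using hx), pow_zero]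
  calc _ = ∑ f : α → Fin d, ∏ x, (ζ ^ (f x : ℕ)) ^ s.count x / (ζ ^ (f x : ℕ)) ^ t.count x := by
        simp only [hprod, Finset.prod_div_distrib]
    _ = ∏ x, ∑ y : Fin d, (ζ ^ (y : ℕ)) ^ s.count x / (ζ ^ (y : ℕ)) ^ t.count x :=
        (Fintype.prod_sum fun x (y : Fin d) =>
          (ζ ^ (y : ℕ)) ^ s.count x / (ζ ^ (y : ℕ)) ^ t.count x).symm
    _ = ∏ x, if s.count x = t.count x then (d : K) else 0 :=
        Finset.prod_congr rfl fun x _ => sum_pow_div_pow_of_isPrimitiveRoot hζ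
          ((s.count_le_card x).trans_lt hs) ((t.count_le_card x).trans_lt ht)
    _ = _ := by
        simp only [Finset.prod_ite_zero, Finset.mem_univ, true_imp_iff, ← Multiset.ext,
          Finset.prod_const, Finset.card_univ]

end RootsOfUnity

lemma multiset_pair_eq_pair_iff {α : Type*} {p q : α × α} :
    ({p.1, p.2} : Multiset α) = {q.1, q.2} ↔ p = q ∨ p = q.swap := by
  simp only [Multiset.insert_eq_cons, Multiset.cons_eq_cons, Multiset.singleton_inj,
    Prod.ext_iff, Multiset.singleton_eq_cons_iff]
  grind [Prod.fst_swap, Prod.snd_swap]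

section TensorConj

variable {n R : Type*} [Fintype n] [CommSemiring R] [StarRing R]

/-- The map `M ↦ U^{⊗2} M (U^{⊗2})†` on operators on two registers. -/
def tensorConj (U : Matrix n n R) : Module.End R (Matrix (n × n) (n × n) R) :=
  LinearMap.mulLeftRight R (U ⊗ₖ U, (U ⊗ₖ U)ᴴ)

lemma tensorConj_apply (U : Matrix n n R) (M : Matrix (n × n) (n × n) R) :
    tensorConj U M = (U ⊗ₖ U) * M * (U ⊗ₖ U)ᴴ :=
  LinearMap.mulLeftRight_apply ..

lemma tensorConj_mul (U V : Matrix n n R) (M : Matrix (n × n) (n × n) R) :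
    tensorConj (U * V) M = tensorConj U (tensorConj V M) := by
  simp only [tensorConj_apply, mul_kronecker_mul, conjTranspose_mul, Matrix.mul_assoc]

variable [DecidableEq n]

lemma tensorConj_eq_self_of_commute {U : Matrix n n R} (hU : U ∈ unitary (Matrix n n R))
    {M : Matrix (n × n) (n × n) R} (hM : Commute (U ⊗ₖ U) M) : tensorConj U M = M := by
  rw [tensorConj_apply, hM.eq, Matrix.mul_assoc, ← star_eq_conjTranspose,
    Unitary.mul_star_self_of_mem (kronecker_mem_unitary hU hU), Matrix.mul_one]

lemma tensorConj_diagonal_apply (v : n → R) (M : Matrix (n × n) (n × n) R) (p q : n × n) :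
    tensorConj (diagonal v) M p q = v p.1 * v p.2 * star (v q.1 * v q.2) * M p q := by
  rw [tensorConj_apply, diagonal_kronecker_diagonal, diagonal_conjTranspose, mul_diagonal,
    diagonal_mul, Pi.star_apply]
  ring

end TensorConj

section Projections

variable {d : ℕ}

lemma SwapF_eq_permMatrix (d : ℕ) :
    SwapF d = Equiv.Perm.permMatrix ℂ (Equiv.prodComm (Fin d) (Fin d)) := by
  ext p q
  simp [SwapF, Prod.ext_iff, and_comm]

lemma commute_kronecker_self_SwapF (U : Matrix (Fin d) (Fin d) ℂ) :
    Commute (U ⊗ₖ U) (SwapF d) := by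
  rw [SwapF_eq_permMatrix, Commute, SemiconjBy, PEquiv.mul_toMatrix_toPEquiv,
    PEquiv.toMatrix_toPEquiv_mul]
  ext p q
  exact mul_comm _ _

lemma tensorConj_PiSym {U : Matrix (Fin d) (Fin d) ℂ} (hU : U ∈ unitaryGroup (Fin d) ℂ) :
    tensorConj U (PiSym d) = PiSym d :=
  tensorConj_eq_self_of_commute hU <|
    ((Commute.one_right _).add_right (commute_kronecker_self_SwapF U)).smul_right _

lemma PiEq_eq_diagonal (d : ℕ) :
    PiEq d = diagonal fun p : Fin d × Fin d => if p.1 = p.2 then 1 else 0 := by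
  ext ⟨a, b⟩ ⟨c, e⟩
  simp only [PiEq, of_apply, diagonal_apply, Prod.mk.injEq]
  grind

lemma tensorConj_PiEq_apply (U : Matrix (Fin d) (Fin d) ℂ) (p q : Fin d × Fin d) :
    tensorConj U (PiEq d) p q = ∑ x, U p.1 x * U p.2 x * star (U q.1 x * U q.2 x) := by
  simp [tensorConj_apply, PiEq_eq_diagonal, mul_apply (M := _ * _), mul_diagonal,
    Fintype.sum_prod_type]

lemma two_smul_PiSym_sub_PiEq_apply (p q : Fin d × Fin d) :
    ((2 : ℂ) • PiSym d - PiEq d) p q = if p = q ∨ p = q.swap then 1 else 0 := by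
  obtain ⟨a, b⟩ := p
  obtain ⟨c, e⟩ := q
  simp only [PiSym, PiEq, SwapF, Matrix.sub_apply, Matrix.smul_apply, Matrix.add_apply,
    Matrix.one_apply, of_apply, Prod.mk.injEq, Prod.swap_prod_mk, smul_eq_mul]
  grind

end Projections

section PhaseTwirl

variable {d : ℕ}

lemma isPrimitiveRoot_omegaC (hd : d ≠ 0) : IsPrimitiveRoot (omegaC d) d :=
  Complex.isPrimitiveRoot_exp d hd

lemma star_omegaC_pow (hd : d ≠ 0) (k : ℕ) : star (omegaC d ^ k) = (omegaC d ^ k)⁻¹ := by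
  refine (Complex.inv_eq_conj ?_).symm
  rw [norm_pow, (isPrimitiveRoot_omegaC hd).norm'_eq_one hd, one_pow]

/-- The average of `M ↦ Z_f^{⊗2} M (Z_f^{⊗2})†` over all `f : Fin d → Fin d`. -/
noncomputable def phaseTwirl (d : ℕ) :
    Module.End ℂ (Matrix (Fin d × Fin d) (Fin d × Fin d) ℂ) :=
  ((d : ℂ) ^ d)⁻¹ • ∑ f, tensorConj (Zmat d f)

lemma sum_omegaC_pow_pair (hd : 3 ≤ d) (p q : Fin d × Fin d) :
    ∑ f : Fin d → Fin d, omegaC d ^ (f p.1 : ℕ) * omegaC d ^ (f p.2 : ℕ) *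
        star (omegaC d ^ (f q.1 : ℕ) * omegaC d ^ (f q.2 : ℕ)) =
      if p = q ∨ p = q.swap then (d : ℂ) ^ d else 0 := by
  have hd0 : d ≠ 0 := by lia
  have hsum := sum_prod_map_div_prod_map_of_isPrimitiveRoot (isPrimitiveRoot_omegaC hd0)
    (s := {p.1, p.2}) (t := {q.1, q.2}) (by simpa) (by simpa)
  rw [Fintype.card_fin, if_congr multiset_pair_eq_pair_iff rfl rfl] at hsum
  simpa only [Multiset.insert_eq_cons, Multiset.map_cons, Multiset.map_singleton,
    Multiset.prod_cons, Multiset.prod_singleton, star_mul', star_omegaC_pow hd0, div_eq_mul_inv,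
    mul_inv] using hsum

lemma phaseTwirl_apply (hd : 3 ≤ d) (M : Matrix (Fin d × Fin d) (Fin d × Fin d) ℂ)
    (p q : Fin d × Fin d) :
    phaseTwirl d M p q = if p = q ∨ p = q.swap then M p q else 0 := by
  have hd0 : d ≠ 0 := by lia
  simp only [phaseTwirl, LinearMap.smul_apply, LinearMap.sum_apply, Matrix.smul_apply,
    Matrix.sum_apply, Zmat, tensorConj_diagonal_apply, ← Finset.sum_mul, sum_omegaC_pow_pair hd]
  split_ifs <;> simp [hd0]

lemma phaseTwirl_eq_self (hd : 3 ≤ d) {M : Matrix (Fin d × Fin d) (Fin d × Fin d) ℂ}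
    (hM : ∀ p q, ¬(p = q ∨ p = q.swap) → M p q = 0) : phaseTwirl d M = M := by
  ext p q
  rw [phaseTwirl_apply hd]
  split_ifs with h
  exacts [rfl, (hM p q h).symm]

lemma phaseTwirl_PiEq (hd : 3 ≤ d) : phaseTwirl d (PiEq d) = PiEq d :=
  phaseTwirl_eq_self hd fun p q h => by
    rw [PiEq_eq_diagonal, diagonal_apply_ne _ fun hpq => h (.inl hpq)]

lemma phaseTwirl_PiSym (hd : 3 ≤ d) : phaseTwirl d (PiSym d) = PiSym d :=
  phaseTwirl_eq_self hd fun p q h => by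
    obtain ⟨hpq, hswap⟩ := not_or.1 h
    have hF : ¬(p.1 = q.2 ∧ p.2 = q.1) := fun hF => hswap (Prod.ext hF.1 hF.2)
    simp [PiSym, SwapF, one_apply, hpq, hF]

/-- All entries of `U` have squared modulus `1/d`; together with unitarity this says that `√d U` is
a complex Hadamard matrix. -/
def IsFlat (U : Matrix (Fin d) (Fin d) ℂ) : Prop :=
  ∀ x y, U x y * star (U x y) = (d : ℂ)⁻¹

lemma IsFlat.tensorConj_PiEq_apply_of_pair {U : Matrix (Fin d) (Fin d) ℂ} (hU : IsFlat U)
    {p q : Fin d × Fin d} (hpq : p = q ∨ p = q.swap) :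
    tensorConj U (PiEq d) p q = (d : ℂ)⁻¹ := by
  have hself (r : Fin d × Fin d) (x : Fin d) :
      U r.1 x * U r.2 x * star (U r.1 x * U r.2 x) = (d : ℂ)⁻¹ * (d : ℂ)⁻¹ := by
    rw [star_mul', mul_mul_mul_comm, hU, hU]
  have hterm (x : Fin d) :
      U p.1 x * U p.2 x * star (U q.1 x * U q.2 x) = (d : ℂ)⁻¹ * (d : ℂ)⁻¹ := by
    rcases hpq with rfl | rfl
    · exact hself p x
    · rw [mul_comm (U q.1 x)]
      exact hself q.swap x
  have hd : (d : ℂ) ≠ 0 := Nat.cast_ne_zero.2 p.1.pos.ne'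
  rw [tensorConj_PiEq_apply, Finset.sum_congr rfl fun x _ => hterm x]
  simp [hd]

lemma IsFlat.phaseTwirl_tensorConj_PiEq (hd : 3 ≤ d) {U : Matrix (Fin d) (Fin d) ℂ}
    (hU : IsFlat U) :
    phaseTwirl d (tensorConj U (PiEq d)) = (d : ℂ)⁻¹ • ((2 : ℂ) • PiSym d - PiEq d) := by
  ext p q
  rw [phaseTwirl_apply hd, Matrix.smul_apply, two_smul_PiSym_sub_PiEq_apply]
  split_ifs with h
  · rw [hU.tensorConj_PiEq_apply_of_pair h, smul_eq_mul, mul_one]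
  · rw [smul_zero]

lemma average_tensorConj_interleaved (U V : Matrix (Fin d) (Fin d) ℂ)
    (M : Matrix (Fin d × Fin d) (Fin d × Fin d) ℂ) :
    ((1 : ℂ) / ((d : ℂ) ^ d) ^ 3) •
        ∑ f : (Fin d → Fin d) × (Fin d → Fin d) × (Fin d → Fin d),
          tensorConj (Zmat d f.2.2 * V * Zmat d f.2.1 * U * Zmat d f.1) M =
      phaseTwirl d (tensorConj V (phaseTwirl d (tensorConj U (phaseTwirl d M)))) := by
  simp only [phaseTwirl, tensorConj_mul, Fintype.sum_prod_type, LinearMap.smul_apply, map_smul,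
    smul_smul, ← LinearMap.sum_apply, ← map_sum]
  congr 1
  ring

end PhaseTwirl

section Fourier

variable {d : ℕ}

lemma Hmat_mul_star_apply (i j k : Fin d) :
    Hmat d i k * star (Hmat d j k) =
      (omegaC d ^ (k : ℕ)) ^ (i : ℕ) / (omegaC d ^ (k : ℕ)) ^ (j : ℕ) / d := by
  have hsqrt : (Real.sqrt d : ℂ) * Real.sqrt d = d := by
    rw [← Complex.ofReal_mul, Real.mul_self_sqrt (Nat.cast_nonneg d), Complex.ofReal_natCast]
  rw [Hmat, of_apply, of_apply, star_div₀, star_omegaC_pow k.pos.ne', Complex.star_def,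
    Complex.conj_ofReal, div_mul_div_comm, hsqrt, pow_mul, pow_mul, ← div_eq_mul_inv]

lemma isFlat_Hmat (d : ℕ) : IsFlat (Hmat d) := fun x y => by
  have hω : omegaC d ≠ 0 := (isPrimitiveRoot_omegaC x.pos.ne').ne_zero x.pos.ne'
  rw [Hmat_mul_star_apply, div_self (pow_ne_zero _ (pow_ne_zero _ hω)), one_div]

lemma Hmat_mem_unitaryGroup (d : ℕ) : Hmat d ∈ unitaryGroup (Fin d) ℂ := by
  refine mem_unitaryGroup_iff.2 (ext fun i j => ?_)
  have hd : d ≠ 0 := i.pos.ne'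
  simp only [mul_apply, star_apply, Hmat_mul_star_apply, ← Finset.sum_div, one_apply, Fin.ext_iff,
    sum_pow_div_pow_of_isPrimitiveRoot (isPrimitiveRoot_omegaC hd) i.isLt j.isLt]
  split_ifs <;> simp [hd]

end Fourier

theorem twirl_threeFold_PiEq_general {d : ℕ} (hd : 3 ≤ d) {U V : Matrix (Fin d) (Fin d) ℂ}
    (hU : IsFlat U) (hV : IsFlat V) (hVu : V ∈ unitaryGroup (Fin d) ℂ) :
    ((1 : ℂ) / ((d : ℂ) ^ d) ^ 3) •
        ∑ f : (Fin d → Fin d) × (Fin d → Fin d) × (Fin d → Fin d),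
          tensorConj (Zmat d f.2.2 * V * Zmat d f.2.1 * U * Zmat d f.1) (PiEq d) =
      ((2 * (d : ℂ) - 1) / (d : ℂ) ^ 2) • PiEq d +
        ((2 * (d : ℂ) - 2) / (d : ℂ) ^ 2) • (PiSym d - PiEq d) := by
  have hd0 : (d : ℂ) ≠ 0 := Nat.cast_ne_zero.2 (by lia)
  calc
    _ = phaseTwirl d (tensorConj V (phaseTwirl d (tensorConj U (PiEq d)))) := by
      rw [average_tensorConj_interleaved, phaseTwirl_PiEq hd]
    _ = (d : ℂ)⁻¹ • ((2 : ℂ) • PiSym d - phaseTwirl d (tensorConj V (PiEq d))) := by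
      rw [hU.phaseTwirl_tensorConj_PiEq hd]
      simp only [map_smul, map_sub, tensorConj_PiSym hVu, phaseTwirl_PiSym hd]
    _ = (d : ℂ)⁻¹ • ((2 : ℂ) • PiSym d - (d : ℂ)⁻¹ • ((2 : ℂ) • PiSym d - PiEq d)) := by
      rw [hV.phaseTwirl_tensorConj_PiEq hd]
    _ = _ := by
      match_scalars <;> field_simp
      ring

/-- `E_{f₁,f₂,f₃}[(Z_{f₃} H_d Z_{f₂} H_d Z_{f₁})^{⊗2} Π^eq ((…)^{⊗2})†]
= ((2d−1)/d²) Π^eq + ((2d−2)/d²) (Π^sym − Π^eq)`, the expectation being the uniform average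
over the three independent function choices. -/
theorem twirl_threeFold_PiEq (d : ℕ) (hd : 3 ≤ d) :
    ((1 : ℂ) / ((d : ℂ) ^ (d : ℕ)) ^ 3) •
        ∑ f : (Fin d → Fin d) × (Fin d → Fin d) × (Fin d → Fin d),
          ((threeFold d f.1 f.2.1 f.2.2) ⊗ₖ (threeFold d f.1 f.2.1 f.2.2)) * PiEq d *
            ((threeFold d f.1 f.2.1 f.2.2) ⊗ₖ (threeFold d f.1 f.2.1 f.2.2))ᴴ
      = ((2 * (d : ℂ) - 1) / (d : ℂ) ^ 2) • PiEq d +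
          ((2 * (d : ℂ) - 2) / (d : ℂ) ^ 2) • (PiSym d - PiEq d) := by
  simpa only [tensorConj_apply, threeFold] using
    twirl_threeFold_PiEq_general hd (isFlat_Hmat d) (isFlat_Hmat d) (Hmat_mem_unitaryGroup d)
end
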